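/- For every (q,p,z) ∈ ℝ³ and every tangent vector (a,b,c) ∈ ℝ³, one has α_{f(q,p,z)}(Df(q,p,z)(a,b,c)) = λ(q,p,z)²·(c − p·a), where Df(q,p,z) is the Fréchet derivative of f at (q,p,z). That is, f pulls back the 1-form x₁dy₁ − y₁dx₁ + x₂dy₂ − y₂dx₂ to λ²·(dz − p dq), a positive function times the standard contact form of J¹(S¹); hence f is a contactomorphism from (J¹(S¹),ξ₁) onto (S³ \ K₀, ξ₀). -/

import Mathlib

open Real

/-- λ(q,p,z) = (1 + p²/4 + z²)^(−1/2) -/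
noncomputable def lam (q p z : ℝ) : ℝ := (Real.sqrt (1 + p ^ 2 / 4 + z ^ 2))⁻¹

/-- f(q,p,z) = λ·(p/2·sin q − z·cos q, cos q, sin q, p/2·cos q + z·sin q) ∈ ℝ⁴,
as a map on ℝ³ = ℝ × ℝ × ℝ. -/
noncomputable def f (x : ℝ × ℝ × ℝ) : EuclideanSpace ℝ (Fin 4) :=
  lam x.1 x.2.1 x.2.2 •
    (WithLp.equiv 2 (Fin 4 → ℝ)).symm
      ![x.2.1 / 2 * Real.sin x.1 - x.2.2 * Real.cos x.1, Real.cos x.1, Real.sin x.1,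
        x.2.1 / 2 * Real.cos x.1 + x.2.2 * Real.sin x.1]

/-- The standard contact form α of ℝ⁴ evaluated at w:
α_w(v) = w₁v₂ − w₂v₁ + w₃v₄ − w₄v₃. -/
def alpha (w v : EuclideanSpace ℝ (Fin 4)) : ℝ :=
  w 0 * v 1 - w 1 * v 0 + w 2 * v 3 - w 3 * v 2

/-
The form `alpha` is alternating and bilinear, so rescaling a map by a function `ℓ` rescales the
pullback of `alpha` by `ℓ ^ 2`: the term with the derivative of `ℓ` is a multiple of `α_w(w) = 0`.
Hence the derivative of `lam` is never needed, and it suffices to pull `alpha` back by `f / lam`,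
whose coordinates are elementary functions.
-/

section Alpha

variable (r : ℝ) (u v w : EuclideanSpace ℝ (Fin 4))

lemma alpha_self : alpha w w = 0 := by
  unfold alpha
  ring

lemma alpha_smul_left : alpha (r • w) v = r * alpha w v := by
  simp only [alpha, PiLp.smul_apply, smul_eq_mul]
  ring

lemma alpha_smul_right : alpha w (r • v) = r * alpha w v := by
  simp only [alpha, PiLp.smul_apply, smul_eq_mul]
  ring

lemma alpha_add_right : alpha w (u + v) = alpha w u + alpha w v := by
  simp only [alpha, PiLp.add_apply]
  ring

end Alpha

section Pullback

variable {E : Type*} [NormedAddCommGroup E] [NormedSpace ℝ E]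

theorem alpha_smul_fderiv_smul {ℓ : E → ℝ} {g : E → EuclideanSpace ℝ (Fin 4)} {x : E}
    (hℓ : DifferentiableAt ℝ ℓ x) (hg : DifferentiableAt ℝ g x) (v : E) :
    alpha (ℓ x • g x) (fderiv ℝ (fun y ↦ ℓ y • g y) x v) =
      ℓ x ^ 2 * alpha (g x) (fderiv ℝ g x v) := by
  have leibniz : fderiv ℝ (fun y ↦ ℓ y • g y) x v =
      ℓ x • fderiv ℝ g x v + fderiv ℝ ℓ x v • g x := by
    simp [fderiv_fun_smul hℓ hg]
  rw [leibniz, alpha_smul_left, alpha_add_right, alpha_smul_right, alpha_smul_right, alpha_self]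
  ring

lemma fderiv_euclidean_apply {ι : Type*} [Finite ι] {g : E → EuclideanSpace ℝ ι} {x : E}
    (hg : DifferentiableAt ℝ g x) (v : E) (i : ι) :
    fderiv ℝ g x v i = fderiv ℝ (fun y ↦ g y i) x v := by
  have := Fintype.ofFinite ι
  have hi : HasFDerivAt (fun y ↦ g y i) (EuclideanSpace.proj i ∘L fderiv ℝ g x) x :=
    (EuclideanSpace.proj i : EuclideanSpace ℝ ι →L[ℝ] ℝ).hasFDerivAt.comp x hg.hasFDerivAt
  rw [hi.fderiv]
  rfl

end Pullback

lemma differentiable_lam : Differentiable ℝ fun x : ℝ × ℝ × ℝ ↦ lam x.1 x.2.1 x.2.2 := by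
  intro x
  have radicand_pos : 0 < 1 + x.2.1 ^ 2 / 4 + x.2.2 ^ 2 := by positivity
  unfold lam
  exact DifferentiableAt.inv (.sqrt (by fun_prop) radicand_pos.ne') (sqrt_pos.2 radicand_pos).ne'

/-- The map `f / lam`, whose radial projection to the unit sphere is `f`: it isolates the part of
`f` that determines the contact structure from the conformal factor `lam`. -/
noncomputable def coneMap (x : ℝ × ℝ × ℝ) : EuclideanSpace ℝ (Fin 4) :=
  !₂[x.2.1 / 2 * sin x.1 - x.2.2 * cos x.1, cos x.1, sin x.1,
    x.2.1 / 2 * cos x.1 + x.2.2 * sin x.1]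

lemma f_eq_lam_smul_coneMap : f = fun x ↦ lam x.1 x.2.1 x.2.2 • coneMap x := rfl

lemma differentiable_coneMap : Differentiable ℝ coneMap := by
  rw [differentiable_euclidean]
  intro i
  fin_cases i <;> dsimp [coneMap] <;> fun_prop

lemma fderiv_coneMap_apply (q p z a b c : ℝ) :
    fderiv ℝ coneMap (q, p, z) (a, b, c) =
      !₂[b / 2 * sin q - c * cos q + a * (p / 2 * cos q + z * sin q),
        -(a * sin q), a * cos q,
        b / 2 * cos q + c * sin q - a * (p / 2 * sin q - z * cos q)] := by
  have hq : HasFDerivAt (fun x : ℝ × ℝ × ℝ ↦ x.1) _ (q, p, z) := hasFDerivAt_fst (𝕜 := ℝ)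
  have hp : HasFDerivAt (fun x : ℝ × ℝ × ℝ ↦ x.2.1 / 2) _ (q, p, z) :=
    (hasFDerivAt_snd (𝕜 := ℝ)).fst.mul_const 2⁻¹
  have hz : HasFDerivAt (fun x : ℝ × ℝ × ℝ ↦ x.2.2) _ (q, p, z) :=
    (hasFDerivAt_snd (𝕜 := ℝ)).snd
  have h₀ : HasFDerivAt (fun x ↦ coneMap x 0) _ (q, p, z) :=
    (hp.mul hq.sin).sub (hz.mul hq.cos)
  have h₁ : HasFDerivAt (fun x ↦ coneMap x 1) _ (q, p, z) := hq.cos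
  have h₂ : HasFDerivAt (fun x ↦ coneMap x 2) _ (q, p, z) := hq.sin
  have h₃ : HasFDerivAt (fun x ↦ coneMap x 3) _ (q, p, z) :=
    (hp.mul hq.cos).add (hz.mul hq.sin)
  ext i
  rw [fderiv_euclidean_apply (differentiable_coneMap _)]
  fin_cases i
  · refine (DFunLike.congr_fun h₀.fderiv _).trans ?_
    simp only [sub_apply, add_apply, smul_apply, smul_eq_mul, ContinuousLinearMap.comp_apply,
      ContinuousLinearMap.coe_fst', ContinuousLinearMap.coe_snd', Fin.zero_eta,
      Matrix.cons_val_zero]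
    ring
  · refine (DFunLike.congr_fun h₁.fderiv _).trans ?_
    simp only [smul_apply, smul_eq_mul, ContinuousLinearMap.coe_fst', Fin.mk_one,
      Matrix.cons_val_one, Matrix.cons_val_zero]
    ring
  · exact (DFunLike.congr_fun h₂.fderiv _).trans (mul_comm _ _)
  · refine (DFunLike.congr_fun h₃.fderiv _).trans ?_
    simp only [add_apply, smul_apply, smul_eq_mul, ContinuousLinearMap.comp_apply,
      ContinuousLinearMap.coe_fst', ContinuousLinearMap.coe_snd', Fin.reduceFinMk,
      Matrix.cons_val]
    ring

lemma alpha_coneMap_fderiv (q p z a b c : ℝ) :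
    alpha (coneMap (q, p, z)) (fderiv ℝ coneMap (q, p, z) (a, b, c)) = c - p * a := by
  rw [fderiv_coneMap_apply]
  simp only [alpha, coneMap, Matrix.cons_val_zero, Matrix.cons_val_one, Matrix.cons_val]
  linear_combination (c - p * a) * sin_sq_add_cos_sq q

/-- f pulls back the standard contact form of ℝ⁴ to λ²·(dz − p dq). -/
theorem f_pullback_contact_form (q p z a b c : ℝ) :
    alpha (f (q, p, z)) (fderiv ℝ f (q, p, z) (a, b, c)) =
      (lam q p z) ^ 2 * (c - p * a) := by
  rw [f_eq_lam_smul_coneMap,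
    alpha_smul_fderiv_smul (differentiable_lam (q, p, z)) (differentiable_coneMap (q, p, z)),
    alpha_coneMap_fderiv]
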